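/- arXiv:2211.12123 — 3 statements merged into one kernel-verified Lean document; each statement's English description precedes it below -/
import Mathlib

section
/- Let ν be a probability measure on a measurable space X, let μ be a probability measure with μ ≪ ν, and let r = dμ/dν denote the Radon–Nikodym derivative. Let φ : ℝ → ℝ be a convex function with φ(1) = 0, and let φ* be its Fenchel conjugate, φ*(t) = sup_{x ≥ 0} (x·t − φ(x)). Then for every measurable function T : X → ℝ such that T is μ-integrable, φ* ∘ T is ν-integrable, and φ ∘ r is ν-integrable, one has ∫ T dμ − ∫ φ*(T) dν ≤ ∫ φ(r) dν; that is, the variational functional E_μ[T] − E_ν[φ*∘T] is a lower bound on the f-divergence D_φ(μ‖ν). -/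
open MeasureTheory

theorem mul_sub_le_of_mem_upperBounds_conjugate {φ : ℝ → ℝ} {x t c : ℝ} (hx : 0 ≤ x)
    (hc : c ∈ upperBounds {y | ∃ s, 0 ≤ s ∧ y = s * t - φ s}) :
    x * t - c ≤ φ x :=
  sub_le_comm.mp (hc ⟨x, hx, rfl⟩)

section

variable {X : Type*} [MeasurableSpace X] {μ ν : Measure X} [μ.HaveLebesgueDecomposition ν]
  [SigmaFinite μ]

theorem integral_sub_integral_le_of_ae_rnDeriv_mul_sub_le (hac : μ ≪ ν) {T g h : X → ℝ}
    (hT : Integrable T μ) (hg : Integrable g ν) (hh : Integrable h ν)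
    (hle : ∀ᵐ x ∂ν, (μ.rnDeriv ν x).toReal * T x - g x ≤ h x) :
    ∫ x, T x ∂μ - ∫ x, g x ∂ν ≤ ∫ x, h x ∂ν := by
  have hrT : Integrable (fun x => (μ.rnDeriv ν x).toReal * T x) ν :=
    (integrable_toReal_rnDeriv_mul_iff hac).mpr hT
  calc ∫ x, T x ∂μ - ∫ x, g x ∂ν
      = ∫ x, ((μ.rnDeriv ν x).toReal * T x - g x) ∂ν := by
        rw [integral_sub hrT hg, integral_toReal_rnDeriv_mul hac]
    _ ≤ ∫ x, h x ∂ν := integral_mono_ae (hrT.sub hg) hh hle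

/-- `φstar` stands for the conjugate of `φ` only at the values of `T`; elsewhere the conjugate may
be `+∞`. -/
theorem variational_lower_bound_general (hac : μ ≪ ν) {φ φstar : ℝ → ℝ} {T : X → ℝ}
    (hφstar : ∀ᵐ x ∂ν, IsLUB {y | ∃ s, 0 ≤ s ∧ y = s * T x - φ s} (φstar (T x)))
    (hTμ : Integrable T μ) (hTν : Integrable (fun x => φstar (T x)) ν)
    (hφr : Integrable (fun x => φ ((μ.rnDeriv ν x).toReal)) ν) :
    ∫ x, T x ∂μ - ∫ x, φstar (T x) ∂ν ≤ ∫ x, φ ((μ.rnDeriv ν x).toReal) ∂ν := by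
  refine integral_sub_integral_le_of_ae_rnDeriv_mul_sub_le hac hTμ hTν hφr ?_
  filter_upwards [hφstar] with x hx
  exact mul_sub_le_of_mem_upperBounds_conjugate ENNReal.toReal_nonneg hx.1

end

/-- Variational lower bound for the f-divergence. Let `μ ≪ ν` be probability measures with
Radon–Nikodym derivative `r = dμ/dν`, let `φ` be convex with `φ(1) = 0`, and let `φstar` be
its Fenchel conjugate `φ*(t) = sup_{x ≥ 0} (x·t − φ(x))`. Then for every measurable `T`
with `T` `μ`-integrable, `φ* ∘ T` `ν`-integrable and `φ ∘ r` `ν`-integrable,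
`∫ T dμ − ∫ φ*(T) dν ≤ ∫ φ(r) dν = D_φ(μ‖ν)`. -/
theorem variational_lower_bound {X : Type*} [MeasurableSpace X]
    (μ ν : Measure X) [IsProbabilityMeasure μ] [IsProbabilityMeasure ν] (hac : μ ≪ ν)
    (φ φstar : ℝ → ℝ) (hconv : ConvexOn ℝ Set.univ φ) (hφ1 : φ 1 = 0)
    (hφstar : ∀ t, IsLUB {y | ∃ x, 0 ≤ x ∧ y = x * t - φ x} (φstar t))
    (T : X → ℝ) (hT : Measurable T) (hTμ : Integrable T μ)
    (hTν : Integrable (fun x => φstar (T x)) ν)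
    (hφr : Integrable (fun x => φ ((μ.rnDeriv ν x).toReal)) ν) :
    ∫ x, T x ∂μ - ∫ x, φstar (T x) ∂ν ≤ ∫ x, φ ((μ.rnDeriv ν x).toReal) ∂ν :=
  variational_lower_bound_general hac (.of_forall fun x => hφstar (T x)) hTμ hTν hφr
end

section
/- Let ν be a probability measure on a measurable space X, let μ be a probability measure with μ ≪ ν and density r = dμ/dν, let φ : ℝ → ℝ be convex with φ(1) = 0, and let φ* be its Fenchel conjugate, φ*(t) = sup_{x ≥ 0} (x·t − φ(x)). Let Y be a type, ℓ : Y × Y → ℝ a loss function, h : X → Y a measurable function, and H a set of measurable functions from X to Y such that for every h' ∈ H the functions x ↦ ℓ(h(x), h'(x)) and x ↦ φ*(ℓ(h(x), h'(x))) are integrable with respect to μ and ν respectively, and φ ∘ r is ν-integrable. Then the discrepancy sup_{h' ∈ H} ( E_{x∼μ}[ℓ(h(x), h'(x))] − E_{x∼ν}[φ*(ℓ(h(x), h'(x)))] ) is at most the f-divergence D_φ(μ‖ν) = ∫ φ(r) dν. -/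
open MeasureTheory

/-!
Young's inequality `x * t - φ* t ≤ φ x`, taken at `x = r` and `t = f` and integrated against `ν`,
gives `∫ f dμ - ∫ φ* ∘ f dν ≤ ∫ φ ∘ r dν` for every test function `f`, in particular for every loss
`ℓ (h, h')`. For an empty hypothesis class the supremum is `sSup ∅ = 0`, and one needs
`0 = φ 1 ≤ ∫ φ ∘ r dν`: this is the same bound for the constant test function equal to a
subgradient of `φ` at `1`, where Young's inequality is an equality.
-/

open Set

/-- `φstar` is the Fenchel conjugate of `φ` restricted to `[0, ∞)`, the range of a density.
It is a relation because the supremum is required to be finite at every `t`. -/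
def IsFenchelConjugate (φ φstar : ℝ → ℝ) : Prop :=
  ∀ t, IsLUB {y | ∃ x, 0 ≤ x ∧ y = x * t - φ x} (φstar t)

theorem rightDeriv_mul_sub_le_sub_of_convexOn {S : Set ℝ} {f : ℝ → ℝ} {x y : ℝ}
    (hf : ConvexOn ℝ S f) (hx : x ∈ interior S) (hy : y ∈ S) :
    derivWithin f (Ioi x) x * (y - x) ≤ f y - f x := by
  rcases lt_trichotomy x y with hxy | rfl | hyx
  · have hslope := hf.rightDeriv_le_slope_of_mem_interior hx hy hxy
    rwa [slope_def_field, le_div_iff₀ (sub_pos.2 hxy)] at hslope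
  · simp
  · have hslope := (hf.slope_le_leftDeriv_of_mem_interior hy hx hyx).trans
      (hf.leftDeriv_le_rightDeriv_of_mem_interior hx)
    rw [slope_def_field, div_le_iff₀ (sub_pos.2 hyx)] at hslope
    linarith

namespace IsFenchelConjugate

variable {φ φstar : ℝ → ℝ}

theorem mul_sub_le (hφstar : IsFenchelConjugate φ φstar) {x : ℝ} (hx : 0 ≤ x) (t : ℝ) :
    x * t - φstar t ≤ φ x :=
  sub_le_comm.1 ((hφstar t).1 ⟨x, hx, rfl⟩)

theorem mul_rightDeriv_sub_eq (hφstar : IsFenchelConjugate φ φstar)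
    (hφ : ConvexOn ℝ (Ici 0) φ) {x : ℝ} (hx : 0 < x) :
    x * derivWithin φ (Ioi x) x - φstar (derivWithin φ (Ioi x) x) = φ x := by
  refine (hφstar.mul_sub_le hx.le _).antisymm (le_sub_comm.1 ((hφstar _).2 ?_))
  rintro _ ⟨y, hy, rfl⟩
  have hsubgradient := rightDeriv_mul_sub_le_sub_of_convexOn hφ (by simpa using hx) (mem_Ici.2 hy)
  linarith

variable {X : Type*} [MeasurableSpace X] {μ ν : Measure X}

theorem integral_sub_integral_le_integral_rnDeriv [SigmaFinite μ] [μ.HaveLebesgueDecomposition ν]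
    (hφstar : IsFenchelConjugate φ φstar) (hac : μ ≪ ν) {f : X → ℝ} (hf : Integrable f μ)
    (hφstarf : Integrable (fun x => φstar (f x)) ν)
    (hφr : Integrable (fun x => φ (μ.rnDeriv ν x).toReal) ν) :
    ∫ x, f x ∂μ - ∫ x, φstar (f x) ∂ν ≤ ∫ x, φ (μ.rnDeriv ν x).toReal ∂ν := by
  have hrf : Integrable (fun x => (μ.rnDeriv ν x).toReal * f x) ν :=
    (integrable_toReal_rnDeriv_mul_iff hac).2 hf
  calc ∫ x, f x ∂μ - ∫ x, φstar (f x) ∂ν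
      = ∫ x, ((μ.rnDeriv ν x).toReal * f x - φstar (f x)) ∂ν := by
        rw [integral_sub hrf hφstarf, integral_toReal_rnDeriv_mul hac]
    _ ≤ ∫ x, φ (μ.rnDeriv ν x).toReal ∂ν :=
        integral_mono (hrf.sub hφstarf) hφr fun x =>
          hφstar.mul_sub_le ENNReal.toReal_nonneg (f x)

theorem mul_le_integral_rnDeriv [IsFiniteMeasure μ] [NeZero μ] [IsFiniteMeasure ν]
    (hφstar : IsFenchelConjugate φ φstar) (hφ : ConvexOn ℝ (Ici 0) φ) (hac : μ ≪ ν)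
    (hφr : Integrable (fun x => φ (μ.rnDeriv ν x).toReal) ν) :
    ν.real univ * φ (μ.real univ / ν.real univ) ≤ ∫ x, φ (μ.rnDeriv ν x).toReal ∂ν := by
  have : NeZero ν := ⟨fun hν => NeZero.ne μ (Measure.absolutelyContinuous_zero_iff.1 (hν ▸ hac))⟩
  have hν : 0 < ν.real univ := measureReal_univ_pos
  set m := μ.real univ / ν.real univ
  set t := derivWithin φ (Ioi m) m
  calc ν.real univ * φ m
      = ν.real univ * (m * t - φstar t) := by
        rw [hφstar.mul_rightDeriv_sub_eq hφ (div_pos measureReal_univ_pos hν)]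
    _ = ∫ _, t ∂μ - ∫ _, φstar t ∂ν := by
        rw [integral_const, integral_const, smul_eq_mul, smul_eq_mul, mul_sub, ← mul_assoc,
          mul_div_cancel₀ _ hν.ne']
    _ ≤ ∫ x, φ (μ.rnDeriv ν x).toReal ∂ν :=
        hφstar.integral_sub_integral_le_integral_rnDeriv hac (integrable_const t)
          (integrable_const (φstar t)) hφr

end IsFenchelConjugate

theorem discrepancy_le_fdiv_general {X Y : Type*} [MeasurableSpace X] {μ ν : Measure X}
    [IsProbabilityMeasure μ] [IsProbabilityMeasure ν] (hac : μ ≪ ν) {φ φstar : ℝ → ℝ}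
    (hφ : ConvexOn ℝ (Ici 0) φ) (hφ1 : φ 1 = 0) (hφstar : IsFenchelConjugate φ φstar)
    {ℓ : Y × Y → ℝ} {h : X → Y} {H : Set (X → Y)}
    (hℓ : ∀ h' ∈ H, Integrable (fun x => ℓ (h x, h' x)) μ)
    (hφstarℓ : ∀ h' ∈ H, Integrable (fun x => φstar (ℓ (h x, h' x))) ν)
    (hφr : Integrable (fun x => φ (μ.rnDeriv ν x).toReal) ν) :
    sSup {d | ∃ h' ∈ H, d = ∫ x, ℓ (h x, h' x) ∂μ - ∫ x, φstar (ℓ (h x, h' x)) ∂ν}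
      ≤ ∫ x, φ (μ.rnDeriv ν x).toReal ∂ν := by
  have hdiv_nonneg : 0 ≤ ∫ x, φ (μ.rnDeriv ν x).toReal ∂ν := by
    simpa [hφ1] using hφstar.mul_le_integral_rnDeriv hφ hac hφr
  refine Real.sSup_le ?_ hdiv_nonneg
  rintro _ ⟨h', hh', rfl⟩
  exact hφstar.integral_sub_integral_le_integral_rnDeriv hac (hℓ h' hh') (hφstarℓ h' hh') hφr

/-- The discrepancy `sup_{h' ∈ H} ( E_μ[ℓ(h, h')] − E_ν[φ*(ℓ(h, h'))] )` over a hypothesis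
class `H` of measurable functions is at most the f-divergence `D_φ(μ‖ν) = ∫ φ(dμ/dν) dν`. -/
theorem discrepancy_le_fdiv {X Y : Type*} [MeasurableSpace X] [MeasurableSpace Y]
    (μ ν : Measure X) [IsProbabilityMeasure μ] [IsProbabilityMeasure ν] (hac : μ ≪ ν)
    (φ φstar : ℝ → ℝ) (hconv : ConvexOn ℝ Set.univ φ) (hφ1 : φ 1 = 0)
    (hφstar : ∀ t, IsLUB {y | ∃ x, 0 ≤ x ∧ y = x * t - φ x} (φstar t))
    (ℓ : Y × Y → ℝ) (h : X → Y) (hh : Measurable h)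
    (H : Set (X → Y)) (hH : ∀ h' ∈ H, Measurable h')
    (hint1 : ∀ h' ∈ H, Integrable (fun x => ℓ (h x, h' x)) μ)
    (hint2 : ∀ h' ∈ H, Integrable (fun x => φstar (ℓ (h x, h' x))) ν)
    (hφr : Integrable (fun x => φ ((μ.rnDeriv ν x).toReal)) ν) :
    sSup {d | ∃ h' ∈ H, d = ∫ x, ℓ (h x, h' x) ∂μ - ∫ x, φstar (ℓ (h x, h' x)) ∂ν}
      ≤ ∫ x, φ ((μ.rnDeriv ν x).toReal) ∂ν :=
  discrepancy_le_fdiv_general hac (hconv.subset (subset_univ _) (convex_Ici 0)) hφ1 hφstar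
    hint1 hint2 hφr
end

section
/- Generalization bound (Theorem 1). Let X be a measurable space with probability measures P_s (source) and P_t (target), let Y be a type, and let ℓ : Y × Y → ℝ be a loss function taking values in [0, 1] and satisfying the triangle inequality ℓ(a, c) ≤ ℓ(a, b) + ℓ(b, c) and symmetry ℓ(a, b) = ℓ(b, a) for all a, b, c ∈ Y. Let φ : ℝ → ℝ be convex with φ(1) = 0 and Fenchel conjugate φ*(t) = sup_{x ≥ 0} (x·t − φ(x)), finite on [0, 1]. Let H be a set of measurable functions X → Y, let h ∈ H, let f_s, f_t : X → Y be measurable labeling functions, and let h* ∈ H. Assume all expectations below exist (the relevant composed functions are integrable). Define the risks R_s^ℓ(h) = E_{x∼P_s}[ℓ(h(x), f_s(x))], R_t^ℓ(h) = E_{x∼P_t}[ℓ(h(x), f_t(x))], the discrepancy D_{h,H}^φ(P_s‖P_t) = sup_{h'∈H} | E_{x∼P_s}[ℓ(h(x), h'(x))] − E_{x∼P_t}[φ*(ℓ(h(x), h'(x)))] |, and λ* = R_s^ℓ(h*) + R_t^ℓ(h*). Then R_t^ℓ(h) ≤ R_s^ℓ(h) + D_{h,H}^φ(P_s‖P_t)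 + λ*. -/
open MeasureTheory

/-!
Passing from `h` to `h*` on the target domain and back on the source domain costs `λ*` by the
triangle inequality. The two remaining terms, `E_{P_t}[φ*(ℓ(h, h*))]` and `E_{P_s}[ℓ(h, h*)]`,
differ by at most the discrepancy. Here `φ*` may be inserted on the target side because `φ 1 = 0`
gives `t ≤ φ* t`. The supremum in the discrepancy is finite since `0 ≤ ℓ ≤ B` forces
`0 ≤ φ* ∘ ℓ ≤ φ* B`.
-/

section FenchelConjugate

/-- `c` is the value at `t` of the Fenchel conjugate of `φ` restricted to `[0, ∞)`. Stating this as
a least upper bound makes finiteness of the conjugate at `t` part of the notion. -/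
def IsFenchelConjugateAt (φ : ℝ → ℝ) (t c : ℝ) : Prop :=
  IsLUB {y | ∃ x, 0 ≤ x ∧ y = x * t - φ x} c

variable {φ : ℝ → ℝ} {s t c d x : ℝ}

lemma IsFenchelConjugateAt.mul_sub_le (hc : IsFenchelConjugateAt φ t c) (hx : 0 ≤ x) :
    x * t - φ x ≤ c :=
  hc.1 ⟨x, hx, rfl⟩

lemma IsFenchelConjugateAt.self_le (hc : IsFenchelConjugateAt φ t c) (hφ : φ 1 = 0) : t ≤ c := by
  simpa [hφ] using hc.mul_sub_le zero_le_one

lemma IsFenchelConjugateAt.mono (hc : IsFenchelConjugateAt φ s c)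
    (hd : IsFenchelConjugateAt φ t d) (hst : s ≤ t) : c ≤ d := by
  refine hc.2 ?_
  rintro _ ⟨x, hx, rfl⟩
  calc x * s - φ x ≤ x * t - φ x := by gcongr
    _ ≤ d := hd.mul_sub_le hx

lemma abs_le_of_isFenchelConjugateAt {φstar : ℝ → ℝ} {B : ℝ} (hφ : φ 1 = 0)
    (hφstar : ∀ t ∈ Set.Icc 0 B, IsFenchelConjugateAt φ t (φstar t)) (ht : t ∈ Set.Icc 0 B) :
    |φstar t| ≤ φstar B := by
  have hB : B ∈ Set.Icc 0 B := Set.right_mem_Icc.2 (ht.1.trans ht.2)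
  rw [abs_of_nonneg (ht.1.trans ((hφstar t ht).self_le hφ))]
  exact (hφstar t ht).mono (hφstar B hB) ht.2

end FenchelConjugate

section Risk

variable {X Y : Type*} [MeasurableSpace X] {P Q : Measure X} {ℓ ℓ₁ ℓ₂ : Y × Y → ℝ}
  {f g k : X → Y}

/-- The risk of `f` relative to the labeling function `g` under `P`, for the loss `ℓ`. -/
noncomputable def risk (ℓ : Y × Y → ℝ) (P : Measure X) (f g : X → Y) : ℝ :=
  ∫ x, ℓ (f x, g x) ∂P

lemma risk_comm (hsymm : ∀ a b, ℓ (a, b) = ℓ (b, a)) (P : Measure X) (f g : X → Y) :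
    risk ℓ P f g = risk ℓ P g f :=
  integral_congr_ae (.of_forall fun _ => hsymm _ _)

lemma risk_le_risk_add_risk (htri : ∀ a b c, ℓ (a, c) ≤ ℓ₁ (a, b) + ℓ₂ (b, c))
    (hfk : Integrable (fun x => ℓ (f x, k x)) P) (hfg : Integrable (fun x => ℓ₁ (f x, g x)) P)
    (hgk : Integrable (fun x => ℓ₂ (g x, k x)) P) :
    risk ℓ P f k ≤ risk ℓ₁ P f g + risk ℓ₂ P g k :=
  calc risk ℓ P f k ≤ ∫ x, (ℓ₁ (f x, g x) + ℓ₂ (g x, k x)) ∂P :=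
        integral_mono hfk (hfg.add hgk) fun _ => htri _ _ _
    _ = risk ℓ₁ P f g + risk ℓ₂ P g k := integral_add hfg hgk

lemma abs_risk_le [IsFiniteMeasure P] {C : ℝ} (hC : ∀ a b, |ℓ (a, b)| ≤ C) (f g : X → Y) :
    |risk ℓ P f g| ≤ C * P.real Set.univ := by
  rw [risk, ← Real.norm_eq_abs]
  exact norm_integral_le_of_norm_le_const (.of_forall fun _ => hC _ _)

/-- The discrepancy between `P` and `Q` seen from `h`: the largest gap between the `ℓ₁`-risk under
`P` and the `ℓ₂`-risk under `Q` over all comparison hypotheses in `H`. The `φ`-discrepancy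
`D_{h,H}^φ` is the case `ℓ₂ = φ* ∘ ℓ₁`. The value is the junk `0` when the gaps are unbounded. -/
noncomputable def discrepancy (ℓ₁ ℓ₂ : Y × Y → ℝ) (P Q : Measure X) (H : Set (X → Y))
    (h : X → Y) : ℝ :=
  sSup {d | ∃ h' ∈ H, d = |risk ℓ₁ P h h' - risk ℓ₂ Q h h'|}

lemma abs_risk_sub_risk_le_discrepancy [IsFiniteMeasure P] [IsFiniteMeasure Q] {C₁ C₂ : ℝ}
    (hC₁ : ∀ a b, |ℓ₁ (a, b)| ≤ C₁) (hC₂ : ∀ a b, |ℓ₂ (a, b)| ≤ C₂) {H : Set (X → Y)}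
    (h : X → Y) {h' : X → Y} (hh' : h' ∈ H) :
    |risk ℓ₁ P h h' - risk ℓ₂ Q h h'| ≤ discrepancy ℓ₁ ℓ₂ P Q H h := by
  refine le_csSup ⟨C₁ * P.real Set.univ + C₂ * Q.real Set.univ, ?_⟩ ⟨h', hh', rfl⟩
  rintro _ ⟨k, -, rfl⟩
  exact (abs_sub _ _).trans (add_le_add (abs_risk_le hC₁ h k) (abs_risk_le hC₂ h k))

end Risk

theorem generalization_bound_general {X Y : Type*} [MeasurableSpace X] {Ps Pt : Measure X}
    [IsFiniteMeasure Ps] [IsFiniteMeasure Pt] {ℓ : Y × Y → ℝ} {B : ℝ}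
    (hℓB : ∀ a b, ℓ (a, b) ∈ Set.Icc 0 B)
    (hℓtri : ∀ a b c, ℓ (a, c) ≤ ℓ (a, b) + ℓ (b, c))
    (hℓsym : ∀ a b, ℓ (a, b) = ℓ (b, a))
    {φ φstar : ℝ → ℝ} (hφ1 : φ 1 = 0)
    (hφstar : ∀ t ∈ Set.Icc 0 B, IsFenchelConjugateAt φ t (φstar t))
    {H : Set (X → Y)} {h fs ft hstar : X → Y} (hstarH : hstar ∈ H)
    (hint_s : Integrable (fun x => ℓ (h x, fs x)) Ps)
    (hint_t : Integrable (fun x => ℓ (h x, ft x)) Pt)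
    (hint_s' : Integrable (fun x => ℓ (hstar x, fs x)) Ps)
    (hint_t' : Integrable (fun x => ℓ (hstar x, ft x)) Pt)
    (hint_hh : Integrable (fun x => ℓ (h x, hstar x)) Ps)
    (hint_hh' : Integrable (fun x => φstar (ℓ (h x, hstar x))) Pt) :
    risk ℓ Pt h ft ≤ risk ℓ Ps h fs + discrepancy ℓ (φstar ∘ ℓ) Ps Pt H h +
      (risk ℓ Ps hstar fs + risk ℓ Pt hstar ft) := by
  have target_triangle :
      risk ℓ Pt h ft ≤ risk (φstar ∘ ℓ) Pt h hstar + risk ℓ Pt hstar ft :=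
    risk_le_risk_add_risk
      (fun a b c => (hℓtri a b c).trans
        (add_le_add_left ((hφstar _ (hℓB a b)).self_le hφ1) _))
      hint_t hint_hh' hint_t'
  have source_triangle : risk ℓ Ps h hstar ≤ risk ℓ Ps h fs + risk ℓ Ps hstar fs := by
    rw [risk_comm hℓsym Ps hstar fs]
    exact risk_le_risk_add_risk hℓtri hint_hh hint_s (hint_s'.congr (.of_forall fun _ => hℓsym _ _))
  have domain_gap : |risk ℓ Ps h hstar - risk (φstar ∘ ℓ) Pt h hstar| ≤
      discrepancy ℓ (φstar ∘ ℓ) Ps Pt H h :=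
    abs_risk_sub_risk_le_discrepancy
      (fun a b => (abs_of_nonneg (hℓB a b).1).trans_le (hℓB a b).2)
      (fun a b => abs_le_of_isFenchelConjugateAt hφ1 hφstar (hℓB a b)) h hstarH
  linarith [(abs_le.1 domain_gap).1]

/-- Generalization bound (Theorem 1 of the paper):
`R_t^ℓ(h) ≤ R_s^ℓ(h) + D_{h,H}^φ(P_s‖P_t) + λ*`, where the loss `ℓ` takes values in
`[0,1]`, satisfies the triangle inequality and symmetry, `φ` is convex with `φ(1) = 0`,
`φstar` is its Fenchel conjugate (finite on `[0,1]`), the discrepancy is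
`D_{h,H}^φ(P_s‖P_t) = sup_{h'∈H} |E_{P_s}[ℓ(h,h')] − E_{P_t}[φ*(ℓ(h,h'))]|`, and
`λ* = R_s^ℓ(h*) + R_t^ℓ(h*)` for the ideal joint hypothesis `h* ∈ H`. -/
theorem generalization_bound {X Y : Type*} [MeasurableSpace X] [MeasurableSpace Y]
    (Ps Pt : Measure X) [IsProbabilityMeasure Ps] [IsProbabilityMeasure Pt]
    (ℓ : Y × Y → ℝ)
    (hℓ01 : ∀ a b, ℓ (a, b) ∈ Set.Icc (0 : ℝ) 1)
    (hℓtri : ∀ a b c, ℓ (a, c) ≤ ℓ (a, b) + ℓ (b, c))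
    (hℓsym : ∀ a b, ℓ (a, b) = ℓ (b, a))
    (φ φstar : ℝ → ℝ) (hconv : ConvexOn ℝ Set.univ φ) (hφ1 : φ 1 = 0)
    (hφstar : ∀ t ∈ Set.Icc (0 : ℝ) 1, IsLUB {y | ∃ x, 0 ≤ x ∧ y = x * t - φ x} (φstar t))
    (H : Set (X → Y)) (hH : ∀ h' ∈ H, Measurable h')
    (h : X → Y) (hhH : h ∈ H)
    (fs ft : X → Y) (hfs : Measurable fs) (hft : Measurable ft)
    (hstar : X → Y) (hstarH : hstar ∈ H)
    (hint_s : Integrable (fun x => ℓ (h x, fs x)) Ps)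
    (hint_t : Integrable (fun x => ℓ (h x, ft x)) Pt)
    (hint_s' : Integrable (fun x => ℓ (hstar x, fs x)) Ps)
    (hint_t' : Integrable (fun x => ℓ (hstar x, ft x)) Pt)
    (hint_hh : ∀ h' ∈ H, Integrable (fun x => ℓ (h x, h' x)) Ps)
    (hint_hh' : ∀ h' ∈ H, Integrable (fun x => φstar (ℓ (h x, h' x))) Pt) :
    ∫ x, ℓ (h x, ft x) ∂Pt ≤
      ∫ x, ℓ (h x, fs x) ∂Ps +
        sSup {d | ∃ h' ∈ H,
          d = |∫ x, ℓ (h x, h' x) ∂Ps - ∫ x, φstar (ℓ (h x, h' x)) ∂Pt|} +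
        (∫ x, ℓ (hstar x, fs x) ∂Ps + ∫ x, ℓ (hstar x, ft x) ∂Pt) := by
  exact generalization_bound_general hℓ01 hℓtri hℓsym hφ1 hφstar hstarH hint_s hint_t hint_s'
    hint_t' (hint_hh hstar hstarH) (hint_hh' hstar hstarH)
end
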